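/- Let F ∈ ℂ[x_0, x_1, x_2, x_3] be a homogeneous form of degree 3 and let M(F) := M(∂F/∂x_0, ∂F/∂x_1, ∂F/∂x_2, ∂F/∂x_3) be the Nanson matrix of its four partial derivatives. Then det M(F) = 0 if and only if there exists a nonzero point p ∈ ℂ^4 at which all four partial derivatives of F vanish, i.e. if and only if the projective cubic surface V(F) ⊂ P^3 is singular. -/

import Mathlib

/-!
Let `Q` be `n` forms of degree `d + 1` in `n` variables, `I = (Q)`, and let `J` be their Jacobian
determinant. Euler's relation and Cramer's rule give `xⱼ J ∈ I`; differentiating,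
`xⱼ ∂ₖJ ≡ d δⱼₖ J` modulo `I`. Hence all the forms `xⱼ Qᵢ` and `∂ₖJ` vanish at every nonzero common
zero `p` of `Q`, and the vector of monomials at `p` is in the kernel of the Nanson matrix.

Conversely, suppose that `0` is the only common zero and that `d` and `d + 1` are nonzero in the
field. The Nullstellensatz gives a matrix `D` and an `N` with `D Q = (xᵢ ^ N)ᵢ`. Let `P` be the
ideal of the `xᵢ ^ N` and `𝔞 = (P : det D)`. Cramer's rule shows that `𝔞` contains `I` and the
coordinates of every syzygy of `Q`. It contains no nonzero scalar multiple of `J`, because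
`J det D ≡ (d + 1) ^ n ∏ᵢ xᵢ ^ (N - 1)` modulo `P`. Take a relation `∑ lᵢ Qᵢ + ∑ cₖ ∂ₖJ = 0` with
scalars `cₖ` and linear forms `lᵢ`. Multiplying by `xⱼ` gives `d cⱼ J ∈ I`, so `c = 0`. Thus `l` is
a syzygy and `lᵢ ∈ 𝔞`; multiplying `lᵢ` by `∂ₖJ` turns its `k`-th coefficient into a scalar multiple
of `J` lying in `𝔞`, so `l = 0`.
-/

open MvPolynomial

/-- The exponent vectors of the 20 degree-3 monomials in `x₀, x₁, x₂, x₃`, in a fixed order. -/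
noncomputable def cubicExp : Fin 20 → (Fin 4 →₀ ℕ) := fun m =>
  Finsupp.equivFunOnFinite.symm
    (![![3,0,0,0], ![2,1,0,0], ![2,0,1,0], ![2,0,0,1],
       ![1,2,0,0], ![1,1,1,0], ![1,1,0,1], ![1,0,2,0], ![1,0,1,1], ![1,0,0,2],
       ![0,3,0,0], ![0,2,1,0], ![0,2,0,1], ![0,1,2,0], ![0,1,1,1], ![0,1,0,2],
       ![0,0,3,0], ![0,0,2,1], ![0,0,1,2], ![0,0,0,3]] m)

/-- The twenty cubic forms of Nanson's construction: the sixteen products `xⱼ · Qᵢ`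
and the four partial derivatives of the Jacobian determinant of `Q₁, …, Q₄`. -/
noncomputable def nansonRow {K : Type*} [CommRing K]
    (Q : Fin 4 → MvPolynomial (Fin 4) K) : Fin 20 → MvPolynomial (Fin 4) K := fun r =>
  if h : (r : ℕ) < 16 then
    X (⟨(r : ℕ) % 4, by omega⟩ : Fin 4) * Q ⟨(r : ℕ) / 4, by omega⟩
  else
    pderiv (⟨(r : ℕ) - 16, by omega⟩ : Fin 4)
      (Matrix.det (Matrix.of fun i j : Fin 4 => pderiv j (Q i)))

/-- Nanson's 20 × 20 matrix of four quaternary quadrics: the coefficient matrix of the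
twenty cubics `nansonRow Q` with respect to the twenty degree-3 monomials. -/
noncomputable def nansonMatrix {K : Type*} [CommRing K]
    (Q : Fin 4 → MvPolynomial (Fin 4) K) : Matrix (Fin 20) (Fin 20) K :=
  Matrix.of fun r c => coeff (cubicExp c) (nansonRow Q r)

open scoped Matrix

/-! ### Ideals generated by powers of variables -/

section PowIdeal

variable {σ R : Type*} [CommSemiring R]

/-- The monomial ideal generated by the powers `X k ^ N` with `k ∈ T`. -/
noncomputable def powIdeal (T : Set σ) (N : ℕ) : Ideal (MvPolynomial σ R) :=
  Ideal.span ((fun k => X k ^ N) '' T)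

theorem mem_powIdeal {T : Set σ} {N : ℕ} {p : MvPolynomial σ R} :
    p ∈ powIdeal T N ↔ ∀ m ∈ p.support, ∃ k ∈ T, N ≤ m k := by
  have h := mem_ideal_span_monomial_image (x := p) (s := (Finsupp.single · N) '' T)
  simpa only [powIdeal, Set.image_image, Set.exists_mem_image, Finsupp.single_le_iff,
    ← X_pow_eq_monomial] using h

theorem X_pow_mem_powIdeal {T : Set σ} (N : ℕ) {k : σ} (hk : k ∈ T) :
    (X k ^ N : MvPolynomial σ R) ∈ powIdeal T N :=
  Ideal.subset_span ⟨k, hk, rfl⟩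

theorem powIdeal_mono {S T : Set σ} (h : S ⊆ T) (N : ℕ) :
    (powIdeal S N : Ideal (MvPolynomial σ R)) ≤ powIdeal T N :=
  Ideal.span_mono (Set.image_mono h)

theorem mem_powIdeal_of_mul_X_pow_mem {T : Set σ} {N n : ℕ} {i : σ} (hi : i ∉ T)
    {p : MvPolynomial σ R} (h : p * X i ^ n ∈ powIdeal T N) : p ∈ powIdeal T N := by
  rw [mem_powIdeal] at h ⊢
  intro m hm
  obtain ⟨k, hk, hN⟩ := h (m + Finsupp.single i n) <| by
    rwa [mem_support_iff, X_pow_eq_monomial, coeff_mul_monomial, mul_one, ← mem_support_iff]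
  have hik : i ≠ k := fun e => hi (e ▸ hk)
  exact ⟨k, hk, by simpa [hik] using hN⟩

theorem C_mul_prod_X_pow_mem_powIdeal_iff [Fintype σ] {n : ℕ} {c : R} :
    C c * ∏ i, X i ^ n ∈ powIdeal (Set.univ : Set σ) (n + 1) ↔ c = 0 := by
  have h : (C c * ∏ i, X i ^ n : MvPolynomial σ R)
      = monomial (Finsupp.equivFunOnFinite.symm fun _ => n) c := by
    simp [monomial_eq, Finsupp.prod_fintype]
  rw [h, mem_powIdeal]
  constructor
  · classical
    intro H
    by_contra hc
    obtain ⟨k, -, hk⟩ := H (Finsupp.equivFunOnFinite.symm fun _ => n) <| by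
      rwa [mem_support_iff, coeff_monomial, if_pos rfl]
    simp at hk
  · rintro rfl
    simp

end PowIdeal

/-! ### Cramer's rule modulo powers of variables -/

section Cramer

theorem span_range_le_colon_det {n A : Type*} [Fintype n] [DecidableEq n] [CommRing A]
    {M : Matrix n n A} {v : n → A} {I : Ideal A} (h : ∀ i, (M *ᵥ v) i ∈ I) :
    Ideal.span (Set.range v) ≤ I.colon {M.det} := by
  rw [Ideal.span_le]
  rintro _ ⟨j, rfl⟩
  have cramer : M.det • v = M.adjugate *ᵥ (M *ᵥ v) := by
    rw [Matrix.mulVec_mulVec, Matrix.adjugate_mul, Matrix.smul_mulVec, Matrix.one_mulVec]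
  rw [SetLike.mem_coe, Submodule.mem_colon_singleton, smul_eq_mul, mul_comm]
  have cramer_j : M.det * v j = ∑ k, M.adjugate j k * (M *ᵥ v) k := congrFun cramer j
  exact cramer_j ▸ sum_mem fun k _ => I.mul_mem_left _ (h k)

variable {σ R : Type*} [Fintype σ] [CommRing R] {N : ℕ} {v : σ → MvPolynomial σ R}
  {D : Matrix σ σ (MvPolynomial σ R)}

theorem X_mem_radical_span_range (hD : D *ᵥ v = fun i => X i ^ N) (k : σ) :
    X k ∈ (Ideal.span (Set.range v)).radical :=
  ⟨N, Ideal.mem_span_range_iff_exists_fun.2 ⟨D k, congrFun hD k⟩⟩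

variable [DecidableEq σ]

/-- The `k`-th power does not occur in `M *ᵥ v`, so Cramer's rule shows that a power of `X k`
multiplies the determinant into the ideal of the powers of the *other* variables. -/
theorem det_mem_powIdeal_of_mulVec_apply_eq_zero {M : Matrix σ σ (MvPolynomial σ R)}
    (hM : ∀ i, (M *ᵥ v) i ∈ Ideal.span {X i ^ N}) {k : σ} (hk : (M *ᵥ v) k = 0)
    (hv : X k ∈ (Ideal.span (Set.range v)).radical) : M.det ∈ powIdeal Set.univ N := by
  obtain ⟨m, hm⟩ := hv
  have hM' : ∀ i, (M *ᵥ v) i ∈ powIdeal {k}ᶜ N := by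
    intro i
    obtain rfl | hik := eq_or_ne i k
    · exact hk ▸ zero_mem _
    · exact (Ideal.span_singleton_le_iff_mem _).2 (X_pow_mem_powIdeal N hik) (hM i)
  have h := Submodule.mem_colon_singleton.1 (span_range_le_colon_det hM' hm)
  rw [smul_eq_mul, mul_comm] at h
  exact powIdeal_mono (Set.subset_univ _) N (mem_powIdeal_of_mul_X_pow_mem (by simp) h)

/-- Expanding `det (E' + (E - E'))` by multilinearity, every term except `det E'` contains a row of
`E - E'`, which kills `v`. -/
theorem det_sub_det_mem_powIdeal {E E' : Matrix σ σ (MvPolynomial σ R)}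
    (h : E *ᵥ v = E' *ᵥ v) (hE : ∀ i, (E *ᵥ v) i ∈ Ideal.span {X i ^ N})
    (hv : ∀ k, X k ∈ (Ideal.span (Set.range v)).radical) :
    E.det - E'.det ∈ powIdeal Set.univ N := by
  let M (s : Finset σ) : Matrix σ σ (MvPolynomial σ R) :=
    Matrix.of fun i => if i ∈ s then E i - E' i else E' i
  have expand : E.det = ∑ s, (M s).det := by
    conv_lhs => rw [← sub_add_cancel E E']
    exact Matrix.detRowAlternating.toMultilinearMap.map_add_univ (fun i => E i - E' i) E'
  have mulVec_M (s : Finset σ) (i : σ) : (M s *ᵥ v) i = if i ∈ s then 0 else (E *ᵥ v) i := by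
    have hi : ∑ j, E i j * v j = ∑ j, E' i j * v j := congrFun h i
    by_cases his : i ∈ s <;> simp [M, Matrix.mulVec, dotProduct, his, hi, sub_mul]
  have M_empty : M ∅ = E' := by ext; simp [M]
  rw [expand, ← Finset.add_sum_erase _ _ (Finset.mem_univ ∅), M_empty, add_sub_cancel_left]
  refine sum_mem fun s hs => ?_
  obtain ⟨k, hk⟩ := Finset.nonempty_iff_ne_empty.2 (Finset.ne_of_mem_erase hs)
  refine det_mem_powIdeal_of_mulVec_apply_eq_zero (v := v) (k := k) (fun i => ?_) ?_ (hv k)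
  · rw [mulVec_M]
    split_ifs
    exacts [zero_mem _, hE i]
  · rw [mulVec_M, if_pos hk]

theorem mem_colon_det_of_mem_span_range (hD : D *ᵥ v = fun i => X i ^ N)
    {p : MvPolynomial σ R} (hp : p ∈ Ideal.span (Set.range v)) :
    p ∈ (powIdeal Set.univ N).colon {D.det} :=
  span_range_le_colon_det (fun i => hD ▸ X_pow_mem_powIdeal N (Set.mem_univ i)) hp

theorem mem_colon_det_of_dotProduct_eq_zero (hD : D *ᵥ v = fun i => X i ^ N)
    {l : σ → MvPolynomial σ R} (hl : l ⬝ᵥ v = 0) (j : σ) :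
    l j ∈ (powIdeal Set.univ N).colon {D.det} := by
  have cramer : ∑ k, D k j * (D.updateRow k l).det = D.det * l j := by
    have := congrFun (Dᵀ.mulVec_cramer l) j
    simpa [Matrix.mulVec, dotProduct, Matrix.cramer_transpose_apply] using this
  rw [Submodule.mem_colon_singleton, smul_eq_mul, mul_comm, ← cramer]
  refine sum_mem fun k _ => Ideal.mul_mem_left _ _ ?_
  have mulVec_updateRow (i : σ) :
      (D.updateRow k l *ᵥ v) i = if i = k then 0 else X i ^ N := by
    split_ifs with hi
    · simpa [hi, Matrix.mulVec] using hl
    · simpa [hi, Matrix.mulVec] using congrFun hD i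
  refine det_mem_powIdeal_of_mulVec_apply_eq_zero (v := v) (k := k) (fun i => ?_) ?_
    (X_mem_radical_span_range hD k)
  · rw [mulVec_updateRow]
    split_ifs
    exacts [zero_mem _, Ideal.mem_span_singleton_self _]
  · rw [mulVec_updateRow, if_pos rfl]

end Cramer

/-! ### The Jacobian determinant -/

section Jacobian

/-- The Jacobian matrix `(∂Qᵢ/∂xⱼ)` of a family of polynomials. -/
noncomputable def jacobianMatrix {ι σ R : Type*} [CommSemiring R] (Q : ι → MvPolynomial σ R) :
    Matrix ι σ (MvPolynomial σ R) :=
  Matrix.of fun i j => pderiv j (Q i)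

theorem jacobianMatrix_mulVec_X {ι σ R : Type*} [Fintype σ] [CommSemiring R] {d : ℕ}
    {Q : ι → MvPolynomial σ R} (hQ : ∀ i, (Q i).IsHomogeneous d) :
    jacobianMatrix Q *ᵥ X = d • Q := by
  funext i
  simpa [jacobianMatrix, Matrix.mulVec, dotProduct, mul_comm] using (hQ i).sum_X_mul_pderiv

variable {σ R : Type*} [Fintype σ] [DecidableEq σ] [CommRing R] {Q : σ → MvPolynomial σ R} {d : ℕ}

theorem X_mul_det_jacobianMatrix (hQ : ∀ i, (Q i).IsHomogeneous d) (j : σ) :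
    X j * (jacobianMatrix Q).det = ∑ i, (jacobianMatrix Q).adjugate j i * (d • Q i) := by
  have cramer : (jacobianMatrix Q).det • X = (jacobianMatrix Q).adjugate *ᵥ (d • Q) := by
    rw [← jacobianMatrix_mulVec_X hQ, Matrix.mulVec_mulVec, Matrix.adjugate_mul,
      Matrix.smul_mulVec, Matrix.one_mulVec]
  rw [mul_comm]
  exact congrFun cramer j

theorem X_mul_det_jacobianMatrix_mem_span_range (hQ : ∀ i, (Q i).IsHomogeneous d) (j : σ) :
    X j * (jacobianMatrix Q).det ∈ Ideal.span (Set.range Q) := by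
  rw [X_mul_det_jacobianMatrix hQ]
  exact sum_mem fun i _ =>
    Ideal.mul_mem_left _ _ (nsmul_mem (Ideal.subset_span (Set.mem_range_self i)) d)

/-- Differentiate `X_mul_det_jacobianMatrix` and use `adj(J) J = det J` once more. -/
theorem X_mul_pderiv_det_jacobianMatrix_sub_mem_span_range
    (hQ : ∀ i, (Q i).IsHomogeneous (d + 1)) (j k : σ) :
    X j * pderiv k (jacobianMatrix Q).det - (if j = k then d • (jacobianMatrix Q).det else 0)
      ∈ Ideal.span (Set.range Q) := by
  set J := jacobianMatrix Q
  have adjugate_mul : ∑ i, J.adjugate j i * pderiv k (Q i) = if j = k then J.det else 0 := by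
    have := congrFun₂ J.adjugate_mul j k
    rwa [Matrix.mul_apply, Matrix.smul_apply, Matrix.one_apply, smul_eq_mul, mul_ite, mul_one,
      mul_zero] at this
  have differentiated : X j * pderiv k J.det + (if j = k then J.det else 0)
      = (d + 1) • ∑ i, pderiv k (J.adjugate j i) * Q i
        + (d + 1) • ∑ i, J.adjugate j i * pderiv k (Q i) := by
    have := congrArg (pderiv k) (X_mul_det_jacobianMatrix hQ j)
    rw [pderiv_mul, pderiv_X, map_sum] at this
    rw [← smul_add, ← Finset.sum_add_distrib, Finset.smul_sum]
    convert this using 1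
    · simp [Pi.single_apply, add_comm, J]
    · exact Finset.sum_congr rfl fun i _ => by rw [mul_smul_comm, map_nsmul, pderiv_mul]
  have key : X j * pderiv k J.det - (if j = k then d • J.det else 0)
      = (d + 1) • ∑ i, pderiv k (J.adjugate j i) * Q i := by
    rw [adjugate_mul] at differentiated
    rw [eq_sub_of_add_eq differentiated]
    split_ifs <;> module
  rw [key]
  exact nsmul_mem (sum_mem fun i _ =>
    Ideal.mul_mem_left _ _ (Ideal.subset_span (Set.mem_range_self i))) _

/-- Modulo `Q` and up to the factor `d • J`, the partial derivatives of `J` are dual to the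
variables. -/
theorem sum_X_mul_sum_pderiv_det_jacobianMatrix_sub_mem_span_range
    (hQ : ∀ i, (Q i).IsHomogeneous (d + 1)) (a c : σ → R) :
    (∑ j, C (a j) * X j) * ∑ k, C (c k) * pderiv k (jacobianMatrix Q).det
        - C (d * a ⬝ᵥ c) * (jacobianMatrix Q).det ∈ Ideal.span (Set.range Q) := by
  have diagonal : C (d * a ⬝ᵥ c) * (jacobianMatrix Q).det = ∑ j, ∑ k,
      C (a j) * C (c k) * (if j = k then d • (jacobianMatrix Q).det else 0) := by
    simp only [mul_ite, mul_zero, Finset.sum_ite_eq, Finset.mem_univ, if_true, ← Finset.sum_mul,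
      dotProduct, map_mul, map_sum, map_natCast, nsmul_eq_mul]
    ring
  rw [Finset.sum_mul_sum, diagonal, ← Finset.sum_sub_distrib]
  refine sum_mem fun j _ => ?_
  rw [← Finset.sum_sub_distrib]
  refine sum_mem fun k _ => ?_
  rw [mul_mul_mul_comm, ← mul_sub]
  exact Ideal.mul_mem_left _ _ (X_mul_pderiv_det_jacobianMatrix_sub_mem_span_range hQ j k)

variable {D : Matrix σ σ (MvPolynomial σ R)} {n : ℕ}

/-- By Euler's relation, `D * jacobianMatrix Q` and a diagonal matrix agree on the vector `X`. -/
theorem det_jacobianMatrix_mul_det_sub_mem_powIdeal (hQ : ∀ i, (Q i).IsHomogeneous d)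
    (hD : D *ᵥ Q = fun i => X i ^ (n + 1)) :
    (jacobianMatrix Q).det * D.det - C ((d : R) ^ Fintype.card σ) * ∏ i, X i ^ n
      ∈ powIdeal Set.univ (n + 1) := by
  let E : Matrix σ σ (MvPolynomial σ R) := Matrix.diagonal fun i => C (d : R) * X i ^ n
  have det_E : E.det = C ((d : R) ^ Fintype.card σ) * ∏ i, X i ^ n := by
    simp [E, Matrix.det_diagonal, Finset.prod_mul_distrib]
  have mul_mulVec_X : (D * jacobianMatrix Q) *ᵥ X = fun i => C (d : R) * X i ^ (n + 1) := by
    rw [← Matrix.mulVec_mulVec, jacobianMatrix_mulVec_X hQ, Matrix.mulVec_smul, hD]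
    funext i
    simp
  have E_mulVec_X : E *ᵥ X = fun i => C (d : R) * X i ^ (n + 1) := by
    funext i
    rw [Matrix.mulVec_diagonal, pow_succ, mul_assoc]
  rw [← det_E, mul_comm, ← Matrix.det_mul]
  refine det_sub_det_mem_powIdeal (v := X) (mul_mulVec_X.trans E_mulVec_X.symm) (fun i => ?_)
    fun k => Ideal.le_radical (Ideal.subset_span (Set.mem_range_self k))
  rw [mul_mulVec_X]
  exact Ideal.mul_mem_left _ _ (Ideal.mem_span_singleton_self _)

theorem eq_zero_of_C_mul_det_jacobianMatrix_mem_colon_det [NoZeroDivisors R] (hd : (d : R) ≠ 0)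
    (hQ : ∀ i, (Q i).IsHomogeneous d) (hD : D *ᵥ Q = fun i => X i ^ (n + 1)) {c : R}
    (hc : C c * (jacobianMatrix Q).det ∈ (powIdeal Set.univ (n + 1)).colon {D.det}) : c = 0 := by
  rw [Submodule.mem_colon_singleton, smul_eq_mul, mul_assoc] at hc
  have socle := Ideal.mul_mem_left _ (C c) (det_jacobianMatrix_mul_det_sub_mem_powIdeal hQ hD)
  rw [mul_sub] at socle
  have hmem := (Submodule.sub_mem_iff_right _ hc).1 socle
  rw [← mul_assoc, ← C_mul, C_mul_prod_X_pow_mem_powIdeal_iff] at hmem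
  have : Nontrivial R := ⟨_, _, hd⟩
  exact (mul_eq_zero.1 hmem).resolve_right (pow_ne_zero _ hd)

variable [NoZeroDivisors R]

theorem eq_zero_of_dotProduct_add_sum_pderiv_eq_zero (hd : (d : R) ≠ 0)
    (hd' : ((d + 1 : ℕ) : R) ≠ 0) (hQ : ∀ i, (Q i).IsHomogeneous (d + 1))
    (hD : D *ᵥ Q = fun i => X i ^ (n + 1)) {l : σ → MvPolynomial σ R} {c : σ → R}
    (h : l ⬝ᵥ Q + ∑ k, C (c k) * pderiv k (jacobianMatrix Q).det = 0) : c = 0 := by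
  funext j
  have dual := sum_X_mul_sum_pderiv_det_jacobianMatrix_sub_mem_span_range hQ (Pi.single j 1) c
  have linear_form : ∑ i, C ((Pi.single j 1 : σ → R) i) * X i = (X j : MvPolynomial σ R) := by
    simp [Pi.single_apply, apply_ite C]
  have syzygy : X j * (l ⬝ᵥ Q) ∈ Ideal.span (Set.range Q) :=
    Ideal.mul_mem_left _ _ (Ideal.mem_span_range_iff_exists_fun.2 ⟨l, rfl⟩)
  rw [linear_form, eq_neg_of_add_eq_zero_right h, single_one_dotProduct, mul_neg] at dual
  have hJ : C (d * c j) * (jacobianMatrix Q).det ∈ Ideal.span (Set.range Q) :=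
    (Submodule.sub_mem_iff_right _ (neg_mem syzygy)).1 dual
  exact (mul_eq_zero.1 (eq_zero_of_C_mul_det_jacobianMatrix_mem_colon_det hd' hQ hD
    (mem_colon_det_of_mem_span_range hD hJ))).resolve_left hd

theorem eq_zero_of_sum_C_mul_X_mem_colon_det (hd : (d : R) ≠ 0)
    (hd' : ((d + 1 : ℕ) : R) ≠ 0) (hQ : ∀ i, (Q i).IsHomogeneous (d + 1))
    (hD : D *ᵥ Q = fun i => X i ^ (n + 1)) {a : σ → R}
    (ha : ∑ j, C (a j) * X j ∈ (powIdeal Set.univ (n + 1)).colon {D.det}) : a = 0 := by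
  funext k
  have dual := mem_colon_det_of_mem_span_range hD
    (sum_X_mul_sum_pderiv_det_jacobianMatrix_sub_mem_span_range hQ a (Pi.single k 1))
  rw [dotProduct_single_one] at dual
  have hJ := (Submodule.sub_mem_iff_right _ (Ideal.mul_mem_right _ _ ha)).1 dual
  exact (mul_eq_zero.1 (eq_zero_of_C_mul_det_jacobianMatrix_mem_colon_det hd' hQ hD
    hJ)).resolve_left hd

end Jacobian

/-! ### Independence of the Nanson forms -/

section NansonFamily

variable {σ R : Type*} [Fintype σ] [DecidableEq σ] [CommRing R] {Q : σ → MvPolynomial σ R} {d : ℕ}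

/-- Nanson's forms `xⱼ Qᵢ`, at the index `(i, j)`, and `∂J/∂xₖ` for as many forms `Qᵢ` as there are
variables. -/
noncomputable def nansonFamily (Q : σ → MvPolynomial σ R) : (σ × σ) ⊕ σ → MvPolynomial σ R :=
  Sum.elim (fun ij => X ij.2 * Q ij.1) fun k => pderiv k (jacobianMatrix Q).det

theorem sum_smul_nansonFamily (g : (σ × σ) ⊕ σ → R) :
    ∑ x, g x • nansonFamily Q x = (fun i => ∑ j, C (g (.inl (i, j))) * X j) ⬝ᵥ Q
      + ∑ k, C (g (.inr k)) * pderiv k (jacobianMatrix Q).det := by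
  simp [nansonFamily, Fintype.sum_sum_type, Fintype.sum_prod_type, dotProduct, smul_eq_C_mul,
    Finset.sum_mul, mul_assoc]

theorem linearIndependent_nansonFamily [NoZeroDivisors R] (hd : (d : R) ≠ 0)
    (hd' : ((d + 1 : ℕ) : R) ≠ 0) (hQ : ∀ i, (Q i).IsHomogeneous (d + 1))
    {D : Matrix σ σ (MvPolynomial σ R)} {n : ℕ} (hD : D *ᵥ Q = fun i => X i ^ (n + 1)) :
    LinearIndependent R (nansonFamily Q) := by
  rw [Fintype.linearIndependent_iff]
  intro g hg
  rw [sum_smul_nansonFamily] at hg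
  have coeff_pderiv := eq_zero_of_dotProduct_add_sum_pderiv_eq_zero hd hd' hQ hD hg
  have syzygy : (fun i => ∑ j, C (g (.inl (i, j))) * X j) ⬝ᵥ Q = 0 := by
    simpa [congrFun coeff_pderiv] using hg
  rintro (⟨i, j⟩ | k)
  · exact congrFun (eq_zero_of_sum_C_mul_X_mem_colon_det hd hd' hQ hD
      (mem_colon_det_of_dotProduct_eq_zero hD syzygy i)) j
  · exact congrFun coeff_pderiv k

theorem eval_nansonFamily_eq_zero [NoZeroDivisors R] (hQ : ∀ i, (Q i).IsHomogeneous (d + 1))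
    {p : σ → R} (hp : p ≠ 0) (hpQ : ∀ i, eval p (Q i) = 0) (x : (σ × σ) ⊕ σ) :
    eval p (nansonFamily Q x) = 0 := by
  have eval_eq_zero {f : MvPolynomial σ R} (hf : f ∈ Ideal.span (Set.range Q)) : eval p f = 0 :=
    (Ideal.span_le (I := RingHom.ker (eval p))).2 (Set.range_subset_iff.2 hpQ) hf
  obtain ⟨j, hj⟩ := Function.ne_iff.1 hp
  have hJ : eval p (jacobianMatrix Q).det = 0 := by
    have := eval_eq_zero (X_mul_det_jacobianMatrix_mem_span_range hQ j)
    rw [map_mul, eval_X] at this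
    exact (mul_eq_zero.1 this).resolve_left hj
  rcases x with ⟨i, k⟩ | k
  · simp [nansonFamily, hpQ]
  · have := eval_eq_zero (X_mul_pderiv_det_jacobianMatrix_sub_mem_span_range hQ j k)
    simp only [map_sub, map_mul, eval_X, apply_ite (eval p), map_nsmul, hJ, smul_zero, map_zero,
      ite_self, sub_zero] at this
    exact (mul_eq_zero.1 this).resolve_left hj

end NansonFamily

theorem exists_mulVec_eq_X_pow_of_common_zero_eq_zero {ι σ K : Type*} [Fintype ι] [Finite σ]
    [Field K] [IsAlgClosed K] {Q : ι → MvPolynomial σ K}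
    (hQ : ∀ p : σ → K, (∀ i, eval p (Q i) = 0) → p = 0) :
    ∃ (n : ℕ) (D : Matrix σ ι (MvPolynomial σ K)), D *ᵥ Q = fun i => X i ^ (n + 1) := by
  have := Fintype.ofFinite σ
  have X_mem_radical (i : σ) : X i ∈ (Ideal.span (Set.range Q)).radical := by
    rw [← vanishingIdeal_zeroLocus_eq_radical (K := K), mem_vanishingIdeal_iff]
    intro p hp
    have hp0 := hQ p fun i => by
      simpa [aeval_eq_eval] using mem_zeroLocus_iff.1 hp (Q i) (Ideal.subset_span ⟨i, rfl⟩)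
    simp [hp0]
  choose N hN using X_mem_radical
  have X_pow_mem (i : σ) : X i ^ ((∑ j, N j) + 1) ∈ Ideal.span (Set.range Q) :=
    Ideal.pow_mem_of_pow_mem _ (hN i) <|
      (Finset.single_le_sum_of_canonicallyOrdered (Finset.mem_univ i)).trans (Nat.le_succ _)
  choose D hD using fun i => Ideal.mem_span_range_iff_exists_fun.1 (X_pow_mem i)
  exact ⟨_, D, funext hD⟩

/-! ### Cubic forms in four variables -/

theorem exists_cubicExp_eq {m : Fin 4 →₀ ℕ} (hm : m.degree = 3) : ∃ c, cubicExp c = m := by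
  have hs : m 0 + m 1 + m 2 + m 3 = 3 := by
    rwa [Finsupp.degree_eq_sum, Fin.sum_univ_four] at hm
  have table : ∀ a b c d : Fin 4, (a : ℕ) + b + c + d = 3 →
      ∃ r, ∀ i, cubicExp r i = ![(a : ℕ), b, c, d] i := by decide
  obtain ⟨r, hr⟩ := table ⟨m 0, by omega⟩ ⟨m 1, by omega⟩ ⟨m 2, by omega⟩ ⟨m 3, by omega⟩ hs
  exact ⟨r, Finsupp.ext fun i => (hr i).trans (by fin_cases i <;> rfl)⟩

theorem cubicExp_injective : Function.Injective cubicExp := by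
  have table : ∀ r s, (∀ i, cubicExp r i = cubicExp s i) → r = s := by decide
  exact fun r s h => table r s (DFunLike.congr_fun h)

theorem sum_monomial_cubicExp {R : Type*} [CommSemiring R] {P : MvPolynomial (Fin 4) R}
    (hP : P.IsHomogeneous 3) : ∑ c, monomial (cubicExp c) (coeff (cubicExp c) P) = P := by
  ext m
  simp only [coeff_sum, coeff_monomial]
  by_cases hm : m.degree = 3
  · obtain ⟨c, rfl⟩ := exists_cubicExp_eq hm
    simp [cubicExp_injective.eq_iff]
  · rw [hP.coeff_eq_zero hm]
    refine Finset.sum_eq_zero fun c _ => ?_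
    split_ifs with h
    · rw [h, hP.coeff_eq_zero hm]
    · rfl

theorem isHomogeneous_det {n σ R : Type*} [Fintype n] [DecidableEq n] [CommRing R] {d : ℕ}
    {M : Matrix n n (MvPolynomial σ R)} (hM : ∀ i j, (M i j).IsHomogeneous d) :
    M.det.IsHomogeneous (Fintype.card n * d) := by
  rw [Matrix.det_apply]
  refine IsHomogeneous.sum _ _ _ fun τ _ => ?_
  have h := IsHomogeneous.prod Finset.univ (fun i => M (τ i) i) (fun _ => d) fun i _ => hM _ _
  rw [Finset.sum_const, Finset.card_univ, smul_eq_mul] at h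
  exact (homogeneousSubmodule σ R _).smul_of_tower_mem (Equiv.Perm.sign τ : ℤ) h

/-! ### The Nanson matrix -/

section NansonMatrix

/-- The order in which the rows of Nanson's matrix enumerate the index type of `nansonFamily`. -/
def nansonIndexEquiv : Fin 20 ≃ (Fin 4 × Fin 4) ⊕ Fin 4 :=
  (finSumFinEquiv (m := 16) (n := 4)).symm.trans
    ((finProdFinEquiv (m := 4) (n := 4)).symm.sumCongr (Equiv.refl (Fin 4)))

variable {R : Type*} [CommRing R] {Q : Fin 4 → MvPolynomial (Fin 4) R}

theorem nansonFamily_comp_nansonIndexEquiv (Q : Fin 4 → MvPolynomial (Fin 4) R) :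
    nansonFamily Q ∘ nansonIndexEquiv = nansonRow Q := by
  funext r
  fin_cases r <;> rfl

theorem nansonFamily_isHomogeneous (hQ : ∀ i, (Q i).IsHomogeneous 2)
    (x : (Fin 4 × Fin 4) ⊕ Fin 4) : (nansonFamily Q x).IsHomogeneous 3 := by
  rcases x with ⟨i, j⟩ | k
  · exact (isHomogeneous_X R j).mul (hQ i)
  · exact (isHomogeneous_det fun i j => (hQ i).pderiv).pderiv

theorem nansonRow_isHomogeneous (hQ : ∀ i, (Q i).IsHomogeneous 2) (r : Fin 20) :
    (nansonRow Q r).IsHomogeneous 3 :=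
  nansonFamily_comp_nansonIndexEquiv Q ▸ nansonFamily_isHomogeneous hQ (nansonIndexEquiv r)

theorem nansonMatrix_mulVec_eval_monomial (hQ : ∀ i, (Q i).IsHomogeneous 2) (p : Fin 4 → R) :
    nansonMatrix Q *ᵥ (fun c => eval p (monomial (cubicExp c) 1))
      = fun r => eval p (nansonRow Q r) := by
  funext r
  conv_rhs => rw [← sum_monomial_cubicExp (nansonRow_isHomogeneous hQ r)]
  simp [Matrix.mulVec, dotProduct, nansonMatrix, eval_monomial]

variable [IsDomain R]

theorem det_nansonMatrix_eq_zero_of_common_zero (hQ : ∀ i, (Q i).IsHomogeneous 2)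
    {p : Fin 4 → R} (hp : p ≠ 0) (hpQ : ∀ i, eval p (Q i) = 0) : (nansonMatrix Q).det = 0 := by
  refine Matrix.exists_mulVec_eq_zero_iff.1
    ⟨fun c => eval p (monomial (cubicExp c) 1), ?_, ?_⟩
  · obtain ⟨j, hj⟩ := Function.ne_iff.1 hp
    obtain ⟨c, hc⟩ := exists_cubicExp_eq (m := Finsupp.single j 3) (by simp)
    exact Function.ne_iff.2 ⟨c, by simpa [hc, eval_monomial] using hj⟩
  · rw [nansonMatrix_mulVec_eval_monomial hQ, ← nansonFamily_comp_nansonIndexEquiv]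
    exact funext fun r => eval_nansonFamily_eq_zero hQ hp hpQ _

theorem det_nansonMatrix_ne_zero_of_linearIndependent (hQ : ∀ i, (Q i).IsHomogeneous 2)
    (h : LinearIndependent R (nansonRow Q)) : (nansonMatrix Q).det ≠ 0 := by
  intro hdet
  obtain ⟨v, hv, hvM⟩ := Matrix.exists_vecMul_eq_zero_iff.2 hdet
  have hom : (∑ r, v r • nansonRow Q r).IsHomogeneous 3 :=
    IsHomogeneous.sum _ _ _ fun r _ =>
      (homogeneousSubmodule (Fin 4) R 3).smul_mem _ (nansonRow_isHomogeneous hQ r)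
  have coeff_eq_zero (c : Fin 20) : coeff (cubicExp c) (∑ r, v r • nansonRow Q r) = 0 := by
    simpa [coeff_sum, Matrix.vecMul, dotProduct, nansonMatrix] using congrFun hvM c
  have relation : ∑ r, v r • nansonRow Q r = 0 := by
    rw [← sum_monomial_cubicExp hom]
    simp only [coeff_eq_zero, map_zero, Finset.sum_const_zero]
  exact hv (funext (Fintype.linearIndependent_iff.1 h v relation))

end NansonMatrix

theorem nanson_det_of_cubic_eq_zero_iff_singular_general {K : Type*} [Field K] [IsAlgClosed K]
    (h2 : (2 : K) ≠ 0) {Q : Fin 4 → MvPolynomial (Fin 4) K} (hQ : ∀ i, (Q i).IsHomogeneous 2) :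
    (nansonMatrix Q).det = 0 ↔ ∃ p : Fin 4 → K, p ≠ 0 ∧ ∀ i, eval p (Q i) = 0 := by
  refine ⟨fun hdet => ?_, fun ⟨_, hp, hpQ⟩ => det_nansonMatrix_eq_zero_of_common_zero hQ hp hpQ⟩
  by_contra! hno
  obtain ⟨n, D, hD⟩ := exists_mulVec_eq_X_pow_of_common_zero_eq_zero fun p hp =>
    by_contra fun hne => (hno p hne).elim fun i hi => hi (hp i)
  have independent : LinearIndependent K (nansonFamily Q) :=
    linearIndependent_nansonFamily (d := 1) (by simp) (by simpa [one_add_one_eq_two]) hQ hD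
  rw [← linearIndependent_equiv nansonIndexEquiv, nansonFamily_comp_nansonIndexEquiv]
    at independent
  exact det_nansonMatrix_ne_zero_of_linearIndependent hQ independent hdet

/-- The determinant of the Nanson matrix `M(F)` of the four partial derivatives of a
quaternary cubic form `F` over ℂ vanishes if and only if the cubic surface `V(F) ⊂ ℙ³`
is singular, i.e. iff the four partials have a common nontrivial zero. -/
theorem nanson_det_of_cubic_eq_zero_iff_singular
    (F : MvPolynomial (Fin 4) ℂ) (hF : F.IsHomogeneous 3) :
    (nansonMatrix fun i => pderiv i F).det = 0 ↔
      ∃ p : Fin 4 → ℂ, p ≠ 0 ∧ ∀ i, eval p (pderiv i F) = 0 := by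
  exact nanson_det_of_cubic_eq_zero_iff_singular_general two_ne_zero fun _ => hF.pderiv
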